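/- Let α ∈ (0,1), β ∈ (0,1], λ > 0, ξ > 0 and t > 0. Define the state probabilities of the space-time Mittag-Leffler process by p_n(t) = the n-th Taylor coefficient at u = 0 of the function u ↦ E_β( −ξ t^β (λ+1)(1−u)^α / (λ + (1−u)^α) ). Then p_n(t) has the fat-tailed large-n asymptotics lim_{n→∞} n^{α+1} · p_n(t) = α(λ+1) ξ t^β / (λ Γ(1−α) Γ(1+β)). -/

import Mathlib

/-- Mittag-Leffler function `E_β(z) = Σ_{m=0}^∞ z^m / Γ(β m + 1)`. -/
noncomputable def mittagLefflerOne (β z : ℝ) : ℝ :=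
  ∑' m : ℕ, z ^ m / Real.Gamma (β * m + 1)

/-!
The function `1 - (1 - u) ^ α` is the generating function of the Sibuya distribution: its
coefficients are nonnegative, sum to `1` and are asymptotic to `α / Γ(1 - α) * n ^ (-α - 1)`.
Written in terms of `x = 1 - (1 - u) ^ α`, the generating function of the process is `F x` with
`F x = E_β(-c (1 - x) / (λ + 1 - x))` and `c = ξ t ^ β (λ + 1)`, which is analytic on the disc of
radius `λ + 1 > 1`. Power law tails are preserved under composition with such an `F`: a convolution
of heavy-tailed sequences is large at `n` only through a single factor, so that the `n`-th
coefficient of `F` of a series is asymptotically its own `n`-th coefficient times the derivative of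
`F` at its sum, here the derivative `c / (λ Γ(1 + β))` of `F` at `1`.
-/

open Filter Topology Finset PowerSeries
open scoped ENNReal NNReal

section AbsolutelySummableCoefficients

/-- The coefficient sequence of `a` is absolutely summable, i.e. `a` lies in the Wiener algebra of
the closed unit disc. -/
def HasSummableCoeffs {A : Type*} [NormedRing A] (a : A⟦X⟧) : Prop :=
  Summable fun n => ‖coeff n a‖

/-- The `ℓ¹` norm of the coefficient sequence of `a`; it is only meaningful under
`HasSummableCoeffs a`, the junk value of a divergent sum being `0`. -/
noncomputable def l1Norm {A : Type*} [NormedRing A] (a : A⟦X⟧) : ℝ :=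
  ∑' n, ‖coeff n a‖

/-- The sum of the coefficients of `a`, i.e. the value of `a` at `1`. The value at `u` is
`coeffSum (rescale u a)`. -/
noncomputable def coeffSum {A : Type*} [NormedRing A] (a : A⟦X⟧) : A :=
  ∑' n, coeff n a

variable {A : Type*} [NormedRing A] {a b : A⟦X⟧}

lemma l1Norm_nonneg (a : A⟦X⟧) : 0 ≤ l1Norm a :=
  tsum_nonneg fun _ => norm_nonneg _

lemma hasSummableCoeffs_one : HasSummableCoeffs (1 : A⟦X⟧) :=
  summable_of_ne_finset_zero (s := {0}) fun n hn => by simp_all [coeff_one]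

lemma l1Norm_one [NormOneClass A] : l1Norm (1 : A⟦X⟧) = 1 := by
  rw [l1Norm, tsum_eq_single 0] <;> simp +contextual [coeff_one]

lemma coeffSum_one : coeffSum (1 : A⟦X⟧) = 1 := by
  rw [coeffSum, tsum_eq_single 0] <;> simp +contextual [coeff_one]

namespace HasSummableCoeffs

lemma mul (ha : HasSummableCoeffs a) (hb : HasSummableCoeffs b) : HasSummableCoeffs (a * b) := by
  simpa only [HasSummableCoeffs, coeff_mul] using
    summable_norm_sum_mul_antidiagonal_of_summable_norm ha hb

lemma pow (ha : HasSummableCoeffs a) (m : ℕ) : HasSummableCoeffs (a ^ m) := by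
  induction m with
  | zero => simpa only [pow_zero] using hasSummableCoeffs_one
  | succ m ih => simpa only [pow_succ] using ih.mul ha

lemma l1Norm_mul_le (ha : HasSummableCoeffs a) (hb : HasSummableCoeffs b) :
    l1Norm (a * b) ≤ l1Norm a * l1Norm b := by
  have ha' : Summable fun n => ‖coeff n a‖ := ha
  have hb' : Summable fun n => ‖coeff n b‖ := hb
  have hprod : Summable fun p : ℕ × ℕ => ‖coeff p.1 a‖ * ‖coeff p.2 b‖ :=
    ha'.mul_of_nonneg hb' (fun _ => norm_nonneg _) (fun _ => norm_nonneg _)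
  calc ∑' n, ‖coeff n (a * b)‖
      ≤ ∑' n, ∑ p ∈ antidiagonal n, ‖coeff p.1 a‖ * ‖coeff p.2 b‖ := by
        refine (ha.mul hb).tsum_le_tsum (fun n => ?_) <|
          summable_sum_mul_antidiagonal_of_summable_mul
            (f := fun n => ‖coeff n a‖) (g := fun n => ‖coeff n b‖) hprod
        rw [coeff_mul]
        exact (norm_sum_le _ _).trans (sum_le_sum fun _ _ => norm_mul_le _ _)
    _ = (∑' n, ‖coeff n a‖) * ∑' n, ‖coeff n b‖ :=
        (ha'.tsum_mul_tsum_eq_tsum_sum_antidiagonal hb' hprod).symm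

lemma l1Norm_pow_le [NormOneClass A] (ha : HasSummableCoeffs a) (m : ℕ) :
    l1Norm (a ^ m) ≤ l1Norm a ^ m := by
  induction m with
  | zero => simp only [pow_zero, l1Norm_one, le_refl]
  | succ m ih =>
    rw [pow_succ, pow_succ]
    exact ((ha.pow m).l1Norm_mul_le ha).trans (by gcongr; exact l1Norm_nonneg a)

lemma norm_coeffSum_le (ha : HasSummableCoeffs a) : ‖coeffSum a‖ ≤ l1Norm a :=
  norm_tsum_le_tsum_norm ha

lemma sum_antidiagonal_fst_le (ha : HasSummableCoeffs a) (n : ℕ) :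
    ∑ p ∈ antidiagonal n, ‖coeff p.1 a‖ ≤ l1Norm a := by
  rw [Nat.sum_antidiagonal_eq_sum_range_succ_mk]
  exact ha.sum_le_tsum _ fun _ _ => norm_nonneg _

lemma sum_antidiagonal_snd_le (ha : HasSummableCoeffs a) (n : ℕ) :
    ∑ p ∈ antidiagonal n, ‖coeff p.2 a‖ ≤ l1Norm a := by
  rw [← Nat.sum_antidiagonal_swap]
  exact ha.sum_antidiagonal_fst_le n

variable [CompleteSpace A]

lemma hasSum (ha : HasSummableCoeffs a) : HasSum (fun n => coeff n a) (coeffSum a) :=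
  Summable.hasSum (Summable.of_norm ha)

lemma coeffSum_mul (ha : HasSummableCoeffs a) (hb : HasSummableCoeffs b) :
    coeffSum (a * b) = coeffSum a * coeffSum b := by
  rw [coeffSum, coeffSum, coeffSum,
    tsum_mul_tsum_eq_tsum_sum_antidiagonal_of_summable_norm ha hb]
  simp only [coeff_mul]

lemma coeffSum_pow (ha : HasSummableCoeffs a) (m : ℕ) : coeffSum (a ^ m) = coeffSum a ^ m := by
  induction m with
  | zero => simp only [pow_zero, coeffSum_one]
  | succ m ih => rw [pow_succ, pow_succ, (ha.pow m).coeffSum_mul ha, ih]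

end HasSummableCoeffs

section Rescale

variable {A : Type*} [NormedCommRing A] [NormOneClass A] {a : A⟦X⟧} {u : A}

lemma norm_coeff_rescale_le (hu : ‖u‖ ≤ 1) (n : ℕ) : ‖coeff n (rescale u a)‖ ≤ ‖coeff n a‖ := by
  rw [coeff_rescale]
  calc ‖u ^ n * coeff n a‖ ≤ ‖u‖ ^ n * ‖coeff n a‖ :=
        (norm_mul_le _ _).trans (by gcongr; exact norm_pow_le u n)
    _ ≤ ‖coeff n a‖ := mul_le_of_le_one_left (norm_nonneg _) (pow_le_one₀ (norm_nonneg _) hu)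

lemma HasSummableCoeffs.rescale (ha : HasSummableCoeffs a) (hu : ‖u‖ ≤ 1) :
    HasSummableCoeffs (rescale u a) :=
  .of_nonneg_of_le (fun _ => norm_nonneg _) (norm_coeff_rescale_le hu) ha

lemma HasSummableCoeffs.l1Norm_rescale_le (ha : HasSummableCoeffs a) (hu : ‖u‖ ≤ 1) :
    l1Norm (PowerSeries.rescale u a) ≤ l1Norm a :=
  (ha.rescale hu).tsum_le_tsum (norm_coeff_rescale_le hu) ha

end Rescale

end AbsolutelySummableCoefficients

section PowerLaw

/-- The coefficients of `a` decay at least like `n ^ (-s)`, with constant `M`. For `s ≠ 0` the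
constant coefficient is unconstrained. -/
def PowerLawBound {A : Type*} [NormedRing A] (s : ℝ) (a : A⟦X⟧) (M : ℝ) : Prop :=
  ∀ n : ℕ, (n : ℝ) ^ s * ‖coeff n a‖ ≤ M

/-- The coefficients of `a` satisfy `coeff n a = L * n ^ (-s) + o(n ^ (-s))`; the limit `L` may
vanish. -/
def HasPowerLawTail {A : Type*} [NormedRing A] [NormedAlgebra ℝ A] (s : ℝ) (a : A⟦X⟧) (L : A) :
    Prop :=
  Tendsto (fun n : ℕ => (n : ℝ) ^ s • coeff n a) atTop (𝓝 L)

namespace PowerLawBound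

variable {A : Type*} [NormedRing A] {a b : A⟦X⟧} {s M N θ : ℝ}

lemma nonneg (h : PowerLawBound s a M) : 0 ≤ M :=
  le_trans (by positivity) (h 0)

lemma hasSummableCoeffs (h : PowerLawBound s a M) (hs : 1 < s) : HasSummableCoeffs a := by
  refine Summable.of_norm_bounded_eventually_nat
    ((Real.summable_nat_rpow.2 (neg_lt_neg hs)).mul_left M) ?_
  filter_upwards [eventually_gt_atTop 0] with n hn
  have hn' : (0 : ℝ) < (n : ℝ) ^ s := by positivity
  rw [norm_norm, Real.rpow_neg n.cast_nonneg, ← div_eq_mul_inv, le_div_iff₀ hn', mul_comm]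
  exact h n

lemma rpow_mul_norm_coeff_le (h : PowerLawBound s a M) (hs : 0 ≤ s) (hθ : 0 < θ) {i n : ℕ}
    (hi : θ * n ≤ i) : (n : ℝ) ^ s * ‖coeff i a‖ ≤ M / θ ^ s := by
  rw [le_div_iff₀ (by positivity)]
  calc (n : ℝ) ^ s * ‖coeff i a‖ * θ ^ s = (θ * n) ^ s * ‖coeff i a‖ := by
        rw [Real.mul_rpow hθ.le n.cast_nonneg]; ring
    _ ≤ (i : ℝ) ^ s * ‖coeff i a‖ := by gcongr
    _ ≤ M := h i

/-- In `i + j = n` either `θ * n ≤ i` or `(1 - θ) * n ≤ j`. -/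
lemma mul (ha : PowerLawBound s a M) (hb : PowerLawBound s b N) (ha₁ : HasSummableCoeffs a)
    (hb₁ : HasSummableCoeffs b) (hs : 0 ≤ s) (hθ : 0 < θ) (hθ₁ : θ < 1) :
    PowerLawBound s (a * b) (M / θ ^ s * l1Norm b + N / (1 - θ) ^ s * l1Norm a) := by
  intro n
  have hM := ha.nonneg
  have hN := hb.nonneg
  have hθ' : 0 < 1 - θ := sub_pos.2 hθ₁
  have hterm : ∀ p ∈ antidiagonal n, (n : ℝ) ^ s * ‖coeff p.1 a * coeff p.2 b‖ ≤
      M / θ ^ s * ‖coeff p.2 b‖ + N / (1 - θ) ^ s * ‖coeff p.1 a‖ := by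
    rintro ⟨i, j⟩ hp
    have hij : (i : ℝ) + j = n := by exact_mod_cast mem_antidiagonal.1 hp
    refine (mul_le_mul_of_nonneg_left (norm_mul_le _ _) (by positivity)).trans ?_
    rcases le_total (θ * n) i with hi | hi
    · have h := mul_le_mul_of_nonneg_right (ha.rpow_mul_norm_coeff_le hs hθ hi)
        (norm_nonneg (coeff j b))
      exact (mul_assoc _ _ _).symm.trans_le (h.trans (le_add_of_nonneg_right (by positivity)))
    · have h := mul_le_mul_of_nonneg_right (hb.rpow_mul_norm_coeff_le hs hθ' (i := j) (n := n)
        (by linarith)) (norm_nonneg (coeff i a))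
      exact (by ring : _ = _).trans_le (h.trans (le_add_of_nonneg_left (by positivity)))
  calc (n : ℝ) ^ s * ‖coeff n (a * b)‖
      ≤ ∑ p ∈ antidiagonal n, (n : ℝ) ^ s * ‖coeff p.1 a * coeff p.2 b‖ := by
        rw [coeff_mul, ← mul_sum]
        gcongr
        exact norm_sum_le _ _
    _ ≤ M / θ ^ s * ∑ p ∈ antidiagonal n, ‖coeff p.2 b‖ +
        N / (1 - θ) ^ s * ∑ p ∈ antidiagonal n, ‖coeff p.1 a‖ := by
        rw [mul_sum, mul_sum, ← sum_add_distrib]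
        exact sum_le_sum hterm
    _ ≤ M / θ ^ s * l1Norm b + N / (1 - θ) ^ s * l1Norm a := by
        gcongr
        · exact hb₁.sum_antidiagonal_snd_le n
        · exact ha₁.sum_antidiagonal_fst_le n

/-- Splitting `a ^ (m + 1) * a` at the fraction `θ = (m + 1) / (m + 2)` rather than `1 / 2` keeps
the loss polynomial in `m`; this is what allows composition with any series whose radius of
convergence merely exceeds `l1Norm a`. -/
lemma pow [NormOneClass A] (h : PowerLawBound s a M) (ha : HasSummableCoeffs a) (hs : 0 < s)
    {r : ℝ} (hr : l1Norm a ≤ r) (m : ℕ) :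
    PowerLawBound s (a ^ m) (M * (m : ℝ) ^ (s + 1) * r ^ (m - 1)) := by
  have hM := h.nonneg
  have hr₀ : 0 ≤ r := (l1Norm_nonneg a).trans hr
  match m with
  | 0 =>
    intro n
    rcases eq_or_ne n 0 with rfl | hn
    · simp [Real.zero_rpow hs.ne', Real.zero_rpow (by linarith : s + 1 ≠ 0)]
    · simp [coeff_one, hn, Real.zero_rpow (by linarith : s + 1 ≠ 0)]
  | 1 => simpa using h
  | m + 2 =>
    intro n
    have ih := h.pow ha hs hr (m + 1)
    have hθ : ((m : ℝ) + 1) / (m + 2) < 1 := by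
      rw [div_lt_one (by positivity)]; linarith
    have hθ' : 1 - ((m : ℝ) + 1) / (m + 2) = 1 / (m + 2) := by field_simp; ring
    have hpow : l1Norm (a ^ (m + 1)) ≤ r ^ (m + 1) :=
      (ha.l1Norm_pow_le _).trans (pow_le_pow_left₀ (l1Norm_nonneg a) hr _)
    rw [pow_succ]
    refine (ih.mul h (ha.pow _) ha hs.le (by positivity) hθ n).trans ?_
    rw [hθ', Real.div_rpow (by positivity) (by positivity),
      Real.div_rpow (by positivity) (by positivity), Real.one_rpow]
    push_cast
    calc _ ≤ M * ((m : ℝ) + 1) ^ (s + 1) * r ^ m / (((m : ℝ) + 1) ^ s / ((m : ℝ) + 2) ^ s) * r +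
          M / (1 / ((m : ℝ) + 2) ^ s) * r ^ (m + 1) := by
          gcongr
      _ = M * ((m : ℝ) + 2) ^ (s + 1) * r ^ (m + 1) := by
          rw [Real.rpow_add_one (by positivity), Real.rpow_add_one (by positivity)]
          field_simp
          ring

end PowerLawBound

namespace HasPowerLawTail

section NormedRing

variable {A : Type*} [NormedRing A] [NormedAlgebra ℝ A] {a b : A⟦X⟧} {s : ℝ} {L : A}

lemma exists_powerLawBound (h : HasPowerLawTail s a L) : ∃ M, PowerLawBound s a M := by
  obtain ⟨M, hM⟩ := (Metric.isBounded_range_of_tendsto _ h).exists_norm_le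
  refine ⟨M, fun n => ?_⟩
  simpa only [norm_smul, Real.norm_of_nonneg (Real.rpow_nonneg n.cast_nonneg s)] using hM _ ⟨n, rfl⟩

lemma hasSummableCoeffs (h : HasPowerLawTail s a L) (hs : 1 < s) : HasSummableCoeffs a :=
  let ⟨_, hM⟩ := h.exists_powerLawBound
  hM.hasSummableCoeffs hs

lemma tendsto_coeff_sub (h : HasPowerLawTail s a L) (i : ℕ) :
    Tendsto (fun n : ℕ => (n : ℝ) ^ s • coeff (n - i) a) atTop (𝓝 L) := by
  rw [← tendsto_add_atTop_iff_nat i]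
  have hratio : Tendsto (fun n : ℕ => (1 + (i : ℝ) / n) ^ s) atTop (𝓝 1) := by
    simpa using ((tendsto_const_div_atTop_nhds_zero_nat (i : ℝ)).const_add 1).rpow_const
      (p := s) (Or.inl (by simp))
  refine (one_smul ℝ L ▸ hratio.smul h).congr' ?_
  filter_upwards [eventually_gt_atTop 0] with n hn
  have hn' : (0 : ℝ) < n := by exact_mod_cast hn
  rw [Nat.add_sub_cancel, smul_smul, ← Real.mul_rpow (by positivity) hn'.le]
  congr 2
  push_cast
  field_simp

lemma tendsto_sum_antidiagonal_filter [CompleteSpace A] (hb : HasPowerLawTail s b L)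
    (ha : HasSummableCoeffs a) (hs : 0 ≤ s) (r : ℕ → ℕ → Prop) [DecidableRel r]
    (hle : ∀ i j, r i j → i ≤ j) (hev : ∀ i, ∀ᶠ j in atTop, r i j) :
    Tendsto (fun n : ℕ => (n : ℝ) ^ s • ∑ p ∈ antidiagonal n with r p.1 p.2,
      coeff p.1 a * coeff p.2 b) atTop (𝓝 (coeffSum a * L)) := by
  obtain ⟨M, hM⟩ := hb.exists_powerLawBound
  have hM₀ := hM.nonneg
  set term : ℕ → ℕ → A := fun n i =>
    if i ≤ n ∧ r i (n - i) then coeff i a * ((n : ℝ) ^ s • coeff (n - i) b) else 0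
  have hlim : Tendsto (fun n => ∑' i, term n i) atTop (𝓝 (∑' i, coeff i a * L)) := by
    refine tendsto_tsum_of_dominated_convergence
      (Summable.mul_right (M / (1 / 2) ^ s) ha) (fun i => ?_) (.of_forall fun n i => ?_)
    · refine ((hb.tendsto_coeff_sub i).const_mul (coeff i a)).congr' ?_
      filter_upwards [eventually_ge_atTop i, (tendsto_sub_atTop_nat i).eventually (hev i)]
        with n hn hr
      exact (if_pos ⟨hn, hr⟩).symm
    · by_cases h : i ≤ n ∧ r i (n - i)
      · have hhalf : 1 / 2 * (n : ℝ) ≤ (n - i : ℕ) := by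
          have := hle _ _ h.2
          rw [Nat.cast_sub h.1]
          have : (2 * i : ℝ) ≤ n := by exact_mod_cast (by omega : 2 * i ≤ n)
          linarith
        simp only [term, if_pos h]
        refine (norm_mul_le _ _).trans (mul_le_mul_of_nonneg_left ?_ (norm_nonneg _))
        rw [norm_smul, Real.norm_of_nonneg (by positivity)]
        exact hM.rpow_mul_norm_coeff_le hs (by norm_num) hhalf
      · simp only [term, if_neg h, norm_zero]
        positivity
  rw [coeffSum, ← (Summable.of_norm ha).tsum_mul_right L]
  refine hlim.congr fun n => ?_
  rw [tsum_eq_sum (s := range (n + 1)) fun i hi => if_neg fun h => hi (by simpa using by omega),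
    sum_filter, Nat.sum_antidiagonal_eq_sum_range_succ_mk, smul_sum]
  refine sum_congr rfl fun i hi => ?_
  simp only [mem_range_succ_iff.1 hi, true_and, mul_smul_comm, smul_ite, smul_zero]

end NormedRing

section NormedCommRing

variable {A : Type*} [NormedCommRing A] [NormedAlgebra ℝ A] {a b : A⟦X⟧} {s : ℝ} {K L : A}

/-- One big jump: an index of a convolution sum of order `n` carries essentially all of `n`. -/
lemma mul [CompleteSpace A] (ha : HasPowerLawTail s a K) (hb : HasPowerLawTail s b L)
    (hs : 1 < s) : HasPowerLawTail s (a * b) (coeffSum a * L + coeffSum b * K) := by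
  have hs₀ : 0 ≤ s := by linarith
  have hleft := hb.tendsto_sum_antidiagonal_filter (ha.hasSummableCoeffs hs) hs₀ (· ≤ ·)
    (fun _ _ h => h) eventually_ge_atTop
  have hright := ha.tendsto_sum_antidiagonal_filter (hb.hasSummableCoeffs hs) hs₀ (· < ·)
    (fun _ _ h => h.le) eventually_gt_atTop
  refine (hleft.add hright).congr fun n => ?_
  rw [← smul_add, coeff_mul, ← sum_filter_add_sum_filter_not (antidiagonal n) fun p => p.1 ≤ p.2]
  congr 2
  rw [sum_filter, sum_filter, ← Nat.sum_antidiagonal_swap]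
  simp only [Prod.fst_swap, Prod.snd_swap, not_le, mul_comm]

lemma pow [CompleteSpace A] (ha : HasPowerLawTail s a L) (hs : 1 < s) (m : ℕ) :
    HasPowerLawTail s (a ^ m) (m * coeffSum a ^ (m - 1) * L) := by
  induction m with
  | zero =>
    refine tendsto_const_nhds.congr' ?_
    filter_upwards [eventually_ne_atTop 0] with n hn
    simp [coeff_one, hn]
  | succ m ih =>
    have h := ih.mul ha hs
    rw [← pow_succ, (ha.hasSummableCoeffs hs).coeffSum_pow] at h
    refine (congrArg (HasPowerLawTail s _) ?_).mp h
    rcases m with _ | m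
    · simp
    · simp only [Nat.add_sub_cancel]
      push_cast
      ring

end NormedCommRing

end HasPowerLawTail

end PowerLaw

section Composition

lemma summable_norm_mul_rpow_mul_pow {𝕜 E F : Type*} [NontriviallyNormedField 𝕜]
    [NormedAddCommGroup E] [NormedSpace 𝕜 E] [NormedAddCommGroup F] [NormedSpace 𝕜 F]
    (p : FormalMultilinearSeries 𝕜 E F) {r : ℝ≥0} (hr : r < p.radius) (x : ℝ) :
    Summable fun m : ℕ => ‖p m‖ * ((m : ℝ) ^ x * (r : ℝ) ^ m) := by
  obtain ⟨q, hrq, hq⟩ := ENNReal.lt_iff_exists_nnreal_btwn.1 hr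
  refine summable_of_isBigO_nat (p.summable_norm_mul_pow hq) ((Asymptotics.isBigO_refl _ _).mul ?_)
  have hpow : (fun m : ℕ => (m : ℝ) ^ ⌈x⌉₊ * (r : ℝ) ^ m) =O[atTop] fun m => (q : ℝ) ^ m :=
    (isLittleO_pow_const_mul_const_pow_const_pow_of_norm_lt _
      (by simpa using hrq)).isBigO
  refine .trans (.of_norm_eventuallyLE ?_) hpow
  filter_upwards [eventually_ge_atTop 1] with m hm
  have hm' : (1 : ℝ) ≤ m := by exact_mod_cast hm
  rw [Real.norm_of_nonneg (by positivity), ← Real.rpow_natCast (m : ℝ)]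
  gcongr
  exact Nat.le_ceil x

variable {𝕜 : Type*} [NontriviallyNormedField 𝕜] {p : FormalMultilinearSeries 𝕜 𝕜 𝕜}
  {F : 𝕜 → 𝕜} {a : 𝕜⟦X⟧} {R : ℝ≥0∞}

lemma hasSum_deriv_of_hasFPowerSeriesOnBall [CompleteSpace 𝕜] (hF : HasFPowerSeriesOnBall F p 0 R)
    {y : 𝕜} (hy : y ∈ Metric.eball 0 R) :
    HasSum (fun m : ℕ => p.coeff m * (m * y ^ (m - 1))) (deriv F y) := by
  have h := (ContinuousLinearMap.apply 𝕜 𝕜 (1 : 𝕜)).hasSum (hF.fderiv.hasSum hy)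
  rw [zero_add] at h
  refine (hasSum_nat_add_iff' 1).1 ?_
  simpa [FormalMultilinearSeries.derivSeries_coeff_one, mul_comm, mul_left_comm, mul_assoc] using h

/-- The composition `∑ₘ p.coeff m • a ^ m` of the power series `p` with `a`, formed coefficientwise.
The constant coefficient of `a` need not vanish, so the coefficients are infinite sums, with junk
value `0` if they diverge. -/
noncomputable def compSeries (p : FormalMultilinearSeries 𝕜 𝕜 𝕜) (a : 𝕜⟦X⟧) : 𝕜⟦X⟧ :=
  PowerSeries.mk fun n => ∑' m, p.coeff m * coeff n (a ^ m)

lemma rescale_compSeries (u : 𝕜) : rescale u (compSeries p a) = compSeries p (rescale u a) := by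
  ext n
  simp only [compSeries, coeff_rescale, coeff_mk, ← map_pow, ← tsum_mul_left, mul_left_comm]

lemma HasSummableCoeffs.coeffSum_mem_eball (ha : HasSummableCoeffs a)
    (haR : ENNReal.ofReal (l1Norm a) < R) : coeffSum a ∈ Metric.eball (0 : 𝕜) R := by
  rw [mem_eball_zero_iff, ← ofReal_norm]
  exact (ENNReal.ofReal_le_ofReal ha.norm_coeffSum_le).trans_lt haR

lemma hasSum_coeff_compSeries [CompleteSpace 𝕜] (hF : HasFPowerSeriesOnBall F p 0 R)
    (ha : HasSummableCoeffs a) (haR : ENNReal.ofReal (l1Norm a) < R) :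
    HasSum (fun n => coeff n (compSeries p a)) (F (coeffSum a)) := by
  have hnorm : Summable fun m => ‖p m‖ * l1Norm a ^ m := by
    simpa [Real.coe_toNNReal _ (l1Norm_nonneg a)] using
      p.summable_norm_mul_pow (haR.trans_le hF.r_le)
  have hdouble : Summable fun q : ℕ × ℕ => p.coeff q.1 * coeff q.2 (a ^ q.1) := by
    refine .of_norm ((summable_prod_of_nonneg fun _ => norm_nonneg _).2 ⟨fun m => ?_, ?_⟩)
    · simpa only [norm_mul] using Summable.mul_left ‖p.coeff m‖ (ha.pow m)
    · refine .of_nonneg_of_le (fun _ => tsum_nonneg fun _ => norm_nonneg _) (fun m => ?_) hnorm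
      simp only [norm_mul, tsum_mul_left, p.norm_apply_eq_norm_coef]
      gcongr
      exact ha.l1Norm_pow_le m
  have hrow (m : ℕ) : HasSum (fun n => p.coeff m * coeff n (a ^ m)) (p.coeff m * coeffSum a ^ m) :=
    ha.coeffSum_pow m ▸ (ha.pow m).hasSum.mul_left _
  have hvalue : HasSum (fun m => p.coeff m * coeffSum a ^ m) (F (coeffSum a)) := by
    simpa [FormalMultilinearSeries.apply_eq_pow_smul_coeff, mul_comm] using
      hF.hasSum (ha.coeffSum_mem_eball haR)
  have htotal : HasSum (fun q : ℕ × ℕ => p.coeff q.1 * coeff q.2 (a ^ q.1)) (F (coeffSum a)) :=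
    (hdouble.hasSum.prod_fiberwise hrow).unique hvalue ▸ hdouble.hasSum
  simpa only [compSeries, coeff_mk, Prod.swap_prod_mk] using
    ((Equiv.prodComm ℕ ℕ).hasSum_iff.2 htotal).prod_fiberwise fun n =>
      (hdouble.prod_symm.prod_factor n).hasSum

theorem HasPowerLawTail.comp [NormedAlgebra ℝ 𝕜] [CompleteSpace 𝕜] {s : ℝ} {L : 𝕜}
    (ha : HasPowerLawTail s a L) (hs : 1 < s) (hF : HasFPowerSeriesOnBall F p 0 R)
    (haR : ENNReal.ofReal (l1Norm a) < R) :
    HasPowerLawTail s (compSeries p a) (deriv F (coeffSum a) * L) := by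
  obtain ⟨M, hM⟩ := ha.exists_powerLawBound
  have hsum := ha.hasSummableCoeffs hs
  obtain ⟨r, har, hrR⟩ := ENNReal.lt_iff_exists_nnreal_btwn.1 haR
  rw [ENNReal.ofReal, ENNReal.coe_lt_coe, Real.toNNReal_lt_iff_lt_coe (l1Norm_nonneg a)] at har
  have hr₀ : (0 : ℝ) < r := (l1Norm_nonneg a).trans_lt har
  have hbound : Summable fun m : ℕ => M / r * (‖p m‖ * ((m : ℝ) ^ (s + 1) * (r : ℝ) ^ m)) :=
    (summable_norm_mul_rpow_mul_pow p (hrR.trans_le hF.r_le) (s + 1)).mul_left _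
  have hlim : Tendsto (fun n : ℕ => ∑' m, p.coeff m * ((n : ℝ) ^ s • coeff n (a ^ m))) atTop
      (𝓝 (∑' m : ℕ, p.coeff m * (m * coeffSum a ^ (m - 1) * L))) := by
    refine tendsto_tsum_of_dominated_convergence hbound
      (fun m => (ha.pow hs m).const_mul _) (.of_forall fun n m => ?_)
    have hpow := hM.pow hsum (by linarith) har.le m n
    rw [norm_mul, norm_smul, Real.norm_of_nonneg (by positivity), p.norm_apply_eq_norm_coef]
    refine (mul_le_mul_of_nonneg_left hpow (norm_nonneg _)).trans_eq ?_
    rcases m with _ | m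
    · simp [Real.zero_rpow (by linarith : s + 1 ≠ 0)]
    · rw [Nat.add_sub_cancel, pow_succ]
      field_simp
  have hderiv := hasSum_deriv_of_hasFPowerSeriesOnBall hF (hsum.coeffSum_mem_eball haR)
  simp only [← mul_assoc] at hlim hderiv
  rw [tsum_mul_right, hderiv.tsum_eq] at hlim
  refine hlim.congr fun n => ?_
  simp only [compSeries, coeff_mk, mul_smul_comm, tsum_const_smul'']

end Composition

section Entire

variable {𝕜 : Type*} [RCLike 𝕜] {F f : 𝕜 → 𝕜} {p q : FormalMultilinearSeries 𝕜 𝕜 𝕜} {R : ℝ≥0∞}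

lemma hasFPowerSeriesOnBall_ofScalars_of_hasSum {c : ℕ → 𝕜} (hR : 0 < R)
    (h : ∀ u ∈ Metric.eball (0 : 𝕜) R, HasSum (fun n => c n * u ^ n) (F u)) :
    HasFPowerSeriesOnBall F (.ofScalars 𝕜 c) 0 R where
  r_le := by
    refine ENNReal.le_of_forall_nnreal_lt fun r hr => ?_
    refine FormalMultilinearSeries.le_radius_of_tendsto _ (l := 0) ?_
    have hr' : ((r : ℝ) : 𝕜) ∈ Metric.eball (0 : 𝕜) R := by
      simpa [mem_eball_zero_iff, enorm_eq_nnnorm] using hr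
    simpa [FormalMultilinearSeries.norm_apply_eq_norm_coef,
      FormalMultilinearSeries.coeff_ofScalars] using (h _ hr').summable.tendsto_atTop_zero.norm
  r_pos := hR
  hasSum {u} hu := by
    simpa [FormalMultilinearSeries.apply_eq_pow_smul_coeff, FormalMultilinearSeries.coeff_ofScalars,
      mul_comm] using h u hu

lemma hasFPowerSeriesOnBall_comp_of_entire (hF : HasFPowerSeriesOnBall F p 0 ⊤)
    (hf : HasFPowerSeriesOnBall f q 0 R) :
    HasFPowerSeriesOnBall (F ∘ f)
      (.ofScalars 𝕜 fun n => coeff n (compSeries p (PowerSeries.mk q.coeff))) 0 R := by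
  refine hasFPowerSeriesOnBall_ofScalars_of_hasSum hf.r_pos fun u hu => ?_
  have hterm (n : ℕ) : coeff n (rescale u (PowerSeries.mk q.coeff)) = q n fun _ => u := by
    rw [coeff_rescale, coeff_mk, q.apply_eq_pow_smul_coeff, smul_eq_mul]
  have hsum : HasSummableCoeffs (rescale u (PowerSeries.mk q.coeff)) := by
    simpa only [HasSummableCoeffs, hterm] using
      q.summable_norm_apply (Metric.eball_subset_eball hf.r_le hu)
  have hvalue : coeffSum (rescale u (PowerSeries.mk q.coeff)) = f u := by
    simpa only [coeffSum, hterm, zero_add] using (hf.hasSum hu).tsum_eq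
  simpa only [← rescale_compSeries, coeff_rescale, hvalue, mul_comm, Function.comp_apply] using
    hasSum_coeff_compSeries hF hsum ENNReal.ofReal_lt_top

end Entire

section Sibuya

lemma factorial_mul_multichoose {A : Type*} [CommRing A] [BinomialRing A] (a : A) (n : ℕ) :
    (n.factorial : A) * Ring.multichoose a n = ∏ j ∈ range n, (a + j) := by
  rw [← nsmul_eq_mul, Ring.factorial_nsmul_multichoose_eq_ascPochhammer,
    Polynomial.ascPochhammer_smeval_eq_eval]
  induction n with
  | zero => simp
  | succ n ih => rw [ascPochhammer_succ_eval, prod_range_succ, ih]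

lemma tendsto_rpow_mul_multichoose {a : ℝ} (ha : ∀ m : ℕ, a ≠ -m) :
    Tendsto (fun n : ℕ => (n : ℝ) ^ (1 - a) * Ring.multichoose a n) atTop
      (𝓝 (Real.Gamma a)⁻¹) := by
  have h := (tendsto_natCast_div_add_atTop a).mul
    ((Real.GammaSeq_tendsto_Gamma a).inv₀ (Real.Gamma_ne_zero ha))
  rw [one_mul] at h
  refine h.congr' ?_
  filter_upwards [eventually_gt_atTop 0] with n hn
  have hn' : (0 : ℝ) < n := by exact_mod_cast hn
  have hna : (n : ℝ) + a ≠ 0 := fun h => ha n (by linarith)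
  rw [Real.GammaSeq, prod_range_succ, ← factorial_mul_multichoose, Real.rpow_sub hn', Real.rpow_one]
  field_simp
  ring

/-- The power series of `1 - (1 - u) ^ α`, which for `0 < α < 1` is the probability generating
function of the Sibuya distribution. -/
noncomputable def sibuyaSeries (α : ℝ) : ℝ⟦X⟧ :=
  1 - PowerSeries.mk fun n => Ring.multichoose (-α) n

variable {α : ℝ}

lemma coeff_sibuyaSeries_of_ne_zero {n : ℕ} (hn : n ≠ 0) :
    coeff n (sibuyaSeries α) = -Ring.multichoose (-α) n := by
  simp [sibuyaSeries, coeff_one, hn]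

lemma coeff_sibuyaSeries_nonneg (hα : α ∈ Set.Icc 0 1) (n : ℕ) :
    0 ≤ coeff n (sibuyaSeries α) := by
  rcases n with _ | n
  · simp [sibuyaSeries]
  · have hprod : 0 ≤ ∏ j ∈ range n, (-α + (j + 1 : ℕ)) :=
      prod_nonneg fun j _ => by push_cast; linarith [hα.2, (Nat.cast_nonneg j : (0 : ℝ) ≤ j)]
    have hfact := factorial_mul_multichoose (-α) (n + 1)
    rw [prod_range_succ', Nat.cast_zero, add_zero] at hfact
    rw [coeff_sibuyaSeries_of_ne_zero n.succ_ne_zero]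
    refine nonneg_of_mul_nonneg_right (a := ((n + 1).factorial : ℝ)) ?_ (by positivity)
    rw [mul_neg, hfact, mul_neg, neg_neg]
    exact mul_nonneg hprod hα.1

lemma hasSum_coeff_sibuyaSeries_mul_pow {u : ℝ} (hu : |u| < 1) :
    HasSum (fun n => coeff n (sibuyaSeries α) * u ^ n) (1 - (1 - u) ^ α) := by
  have h1u : 0 ≤ 1 - u := by linarith [(abs_lt.1 hu).2]
  have hone : HasSum (fun n => coeff n (1 : ℝ⟦X⟧) * u ^ n) 1 := by
    simpa using hasSum_single (f := fun n => coeff n (1 : ℝ⟦X⟧) * u ^ n) 0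
      fun n hn => by simp [coeff_one, hn]
  have hbinom : HasSum (fun n => Ring.multichoose (-α) n * u ^ n) ((1 - u) ^ α) := by
    simpa [Ring.multichoose_eq, Real.rpow_neg h1u, mul_comm] using
      (Real.one_div_one_sub_rpow_hasFPowerSeriesOnBall_zero (-α)).hasSum (y := u)
        (by simpa [enorm_eq_nnnorm, ← NNReal.coe_lt_one] using hu)
  simpa only [sibuyaSeries, map_sub, coeff_mk, sub_mul] using hone.sub hbinom

lemma hasPowerLawTail_sibuyaSeries (hα : α ∈ Set.Ioo 0 1) :
    HasPowerLawTail (α + 1) (sibuyaSeries α) (α / Real.Gamma (1 - α)) := by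
  have hΓ : Real.Gamma (1 - α) = -α * Real.Gamma (-α) := by
    rw [← Real.Gamma_add_one (neg_ne_zero.2 hα.1.ne'), neg_add_eq_sub]
  have hne (m : ℕ) : -α ≠ -m := by
    intro h
    rcases m with _ | m
    · exact hα.1.ne' (by simpa using h)
    · push_cast at h
      linarith [hα.2, (Nat.cast_nonneg m : (0 : ℝ) ≤ m)]
  have hlim : -(Real.Gamma (-α))⁻¹ = α / Real.Gamma (1 - α) := by
    have := Real.Gamma_ne_zero hne
    have := hα.1.ne'
    rw [hΓ]
    field_simp
  refine (hlim ▸ (tendsto_rpow_mul_multichoose hne).neg).congr' ?_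
  filter_upwards [eventually_ne_atTop 0] with n hn
  rw [coeff_sibuyaSeries_of_ne_zero hn, smul_eq_mul, mul_neg, sub_neg_eq_add, add_comm]

lemma hasSummableCoeffs_sibuyaSeries (hα : α ∈ Set.Ioo 0 1) :
    HasSummableCoeffs (sibuyaSeries α) :=
  (hasPowerLawTail_sibuyaSeries hα).hasSummableCoeffs (by linarith [hα.1])

lemma coeffSum_sibuyaSeries (hα : α ∈ Set.Ioo 0 1) : coeffSum (sibuyaSeries α) = 1 := by
  have habel := Real.tendsto_tsum_powerSeries_nhdsWithin_lt
    (hasSummableCoeffs_sibuyaSeries hα).hasSum.tendsto_sum_nat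
  have hcont : Tendsto (fun u : ℝ => 1 - (1 - u) ^ α) (𝓝[<] 1) (𝓝 1) := by
    have : ContinuousAt (fun u : ℝ => 1 - (1 - u) ^ α) 1 := by
      fun_prop (disch := simp [hα.1.le])
    simpa [ContinuousAt, hα.1.ne'] using this.tendsto.mono_left nhdsWithin_le_nhds
  refine tendsto_nhds_unique habel (hcont.congr' ?_)
  filter_upwards [Ioo_mem_nhdsLT (show (-1 : ℝ) < 1 by norm_num)] with u hu
  exact (hasSum_coeff_sibuyaSeries_mul_pow (abs_lt.2 hu)).tsum_eq.symm

lemma l1Norm_sibuyaSeries (hα : α ∈ Set.Ioo 0 1) : l1Norm (sibuyaSeries α) = 1 := by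
  rw [← coeffSum_sibuyaSeries hα, l1Norm, coeffSum]
  exact tsum_congr fun n =>
    Real.norm_of_nonneg (coeff_sibuyaSeries_nonneg (Set.Ioo_subset_Icc_self hα) n)

end Sibuya

section Transfer

lemma taylorCoeff_eq_coeff {f : ℝ → ℝ} {a : ℝ⟦X⟧}
    (h : ∀ᶠ u in 𝓝 0, HasSum (fun n => coeff n a * u ^ n) (f u)) (n : ℕ) :
    1 / (n.factorial : ℝ) * iteratedDeriv n f 0 = coeff n a := by
  have hf : HasFPowerSeriesAt f (.ofScalars ℝ fun n => coeff n a) 0 := by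
    rw [hasFPowerSeriesAt_iff]
    filter_upwards [h] with u hu
    simpa [FormalMultilinearSeries.coeff_ofScalars, mul_comm] using hu
  have hTaylor := hf.analyticAt.hasFPowerSeriesAt.eq_formalMultilinearSeries hf
  rw [← congrFun ((FormalMultilinearSeries.ofScalars_series_eq_iff ℝ _ _).1 hTaylor) n,
    one_div_mul_eq_div]

variable {F : ℝ → ℝ} {p : FormalMultilinearSeries ℝ ℝ ℝ} {R : ℝ≥0∞} {α : ℝ}

lemma hasSum_coeff_compSeries_sibuyaSeries_mul_pow (hα : α ∈ Set.Ioo 0 1)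
    (hF : HasFPowerSeriesOnBall F p 0 R) (hR : 1 < R) {u : ℝ} (hu : |u| < 1) :
    HasSum (fun n => coeff n (compSeries p (sibuyaSeries α)) * u ^ n) (F (1 - (1 - u) ^ α)) := by
  have hsum := hasSummableCoeffs_sibuyaSeries hα
  have hnorm : ENNReal.ofReal (l1Norm (rescale u (sibuyaSeries α))) < R :=
    (ENNReal.ofReal_le_one.2
      ((hsum.l1Norm_rescale_le hu.le).trans_eq (l1Norm_sibuyaSeries hα))).trans_lt hR
  have heval : coeffSum (rescale u (sibuyaSeries α)) = 1 - (1 - u) ^ α := by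
    simpa only [coeffSum, coeff_rescale, mul_comm] using
      (hasSum_coeff_sibuyaSeries_mul_pow hu).tsum_eq
  have h := hasSum_coeff_compSeries hF (hsum.rescale hu.le) hnorm
  rw [heval, ← rescale_compSeries] at h
  simpa only [coeff_rescale, mul_comm] using h

theorem tendsto_rpow_mul_taylorCoeff_comp_one_sub_rpow (hα : α ∈ Set.Ioo 0 1)
    (hF : HasFPowerSeriesOnBall F p 0 R) (hR : 1 < R) :
    Tendsto (fun n : ℕ => (n : ℝ) ^ (α + 1) *
        (1 / (n.factorial : ℝ) * iteratedDeriv n (fun u => F (1 - (1 - u) ^ α)) 0)) atTop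
      (𝓝 (deriv F 1 * (α / Real.Gamma (1 - α)))) := by
  have hseries : ∀ᶠ u : ℝ in 𝓝 0, HasSum
      (fun n => coeff n (compSeries p (sibuyaSeries α)) * u ^ n) (F (1 - (1 - u) ^ α)) := by
    filter_upwards [eventually_abs_sub_lt (0 : ℝ) one_pos] with u hu
    exact hasSum_coeff_compSeries_sibuyaSeries_mul_pow hα hF hR (by simpa using hu)
  have htail := (hasPowerLawTail_sibuyaSeries hα).comp (by linarith [hα.1]) hF
    (by rwa [l1Norm_sibuyaSeries hα, ENNReal.ofReal_one])
  rw [coeffSum_sibuyaSeries hα] at htail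
  simp only [taylorCoeff_eq_coeff hseries]
  exact htail

end Transfer

section MittagLeffler

lemma rpow_mul_exp_neg_le_Gamma {x R : ℝ} (hx : 0 ≤ x) (hR : 0 < R) :
    R ^ x * Real.exp (-R) ≤ Real.Gamma (x + 1) := by
  have hint := Real.GammaIntegral_convergent (s := x + 1) (by linarith)
  rw [Real.Gamma_eq_integral (by linarith), ← integral_exp_neg_Ioi,
    ← MeasureTheory.integral_const_mul]
  calc ∫ y in Set.Ioi R, R ^ x * Real.exp (-y)
      ≤ ∫ y in Set.Ioi R, Real.exp (-y) * y ^ (x + 1 - 1) := by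
        refine MeasureTheory.setIntegral_mono_on
          ((integrableOn_exp_neg_Ioi R).const_mul _)
          (hint.mono_set (Set.Ioi_subset_Ioi hR.le)) measurableSet_Ioi fun y hy => ?_
        have hRy : R ≤ y := le_of_lt hy
        rw [add_sub_cancel_right, mul_comm]
        gcongr
    _ ≤ ∫ y in Set.Ioi 0, Real.exp (-y) * y ^ (x + 1 - 1) := by
        refine MeasureTheory.setIntegral_mono_set hint ?_
          (Set.Ioi_subset_Ioi hR.le).eventuallyLE
        filter_upwards [MeasureTheory.ae_restrict_mem measurableSet_Ioi] with y hy
        have hy' : 0 < y := hy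
        rw [Pi.zero_apply]
        positivity

variable {β : ℝ}

lemma summable_pow_div_Gamma (hβ : 0 < β) (z : ℝ) :
    Summable fun m : ℕ => z ^ m / Real.Gamma (β * m + 1) := by
  have hz : 0 < 2 * (|z| + 1) := by positivity
  -- With this `R`, the bound `Γ(β m + 1) ≥ e⁻ᴿ (R ^ β) ^ m` makes the terms `O(2⁻ᵐ)`.
  obtain ⟨R, hR₀, hRβ⟩ : ∃ R : ℝ, 0 < R ∧ R ^ β = 2 * (|z| + 1) :=
    ⟨_, Real.rpow_pos_of_pos hz β⁻¹, Real.rpow_inv_rpow hz.le hβ.ne'⟩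
  refine .of_norm_bounded (summable_geometric_two.mul_left (Real.exp R)) fun m => ?_
  have hΓ := rpow_mul_exp_neg_le_Gamma (x := β * m) (by positivity) hR₀
  rw [Real.rpow_mul hR₀.le, hRβ, Real.rpow_natCast, Real.exp_neg] at hΓ
  have hΓ₀ : 0 < Real.Gamma (β * m + 1) := Real.Gamma_pos_of_pos (by positivity)
  rw [norm_div, norm_pow, Real.norm_eq_abs, Real.norm_of_nonneg hΓ₀.le, div_le_iff₀ hΓ₀]
  calc |z| ^ m ≤ (|z| + 1) ^ m := by gcongr; linarith
    _ = Real.exp R * (1 / 2) ^ m * ((2 * (|z| + 1)) ^ m * (Real.exp R)⁻¹) := by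
        have := Real.exp_ne_zero R
        rw [mul_pow, one_div, inv_pow]
        field_simp
    _ ≤ Real.exp R * (1 / 2) ^ m * Real.Gamma (β * m + 1) := by gcongr

lemma hasFPowerSeriesOnBall_mittagLefflerOne (hβ : 0 < β) :
    HasFPowerSeriesOnBall (mittagLefflerOne β)
      (.ofScalars ℝ fun m : ℕ => (Real.Gamma (β * m + 1))⁻¹) 0 ⊤ :=
  hasFPowerSeriesOnBall_ofScalars_of_hasSum ENNReal.zero_lt_top fun z _ => by
    simpa only [mittagLefflerOne, div_eq_inv_mul] using (summable_pow_div_Gamma hβ z).hasSum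

lemma hasDerivAt_mittagLefflerOne_zero (hβ : 0 < β) :
    HasDerivAt (mittagLefflerOne β) (Real.Gamma (1 + β))⁻¹ 0 := by
  simpa [FormalMultilinearSeries.apply_eq_pow_smul_coeff, FormalMultilinearSeries.coeff_ofScalars,
    add_comm] using (hasFPowerSeriesOnBall_mittagLefflerOne hβ).hasFPowerSeriesAt.hasDerivAt

variable {lam : ℝ} (c : ℝ)

lemma exists_hasFPowerSeriesOnBall_moebius (hlam : lam + 1 ≠ 0) :
    ∃ q : FormalMultilinearSeries ℝ ℝ ℝ, HasFPowerSeriesOnBall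
      (fun x : ℝ => -(c * (1 - x) / (lam + (1 - x)))) q 0 ‖lam + 1‖ₑ := by
  have hinv := (Real.one_div_sub_hasFPowerSeriesOnBall_zero hlam).const_smul (c := c * lam)
  have hconst := (hasFPowerSeriesOnBall_const (𝕜 := ℝ) (c := -c) (e := (0 : ℝ))).mono
    (enorm_pos.2 hlam) le_top
  refine ⟨_, (hconst.add hinv).congr fun x hx => ?_⟩
  have hx' : lam + 1 - x ≠ 0 := by
    intro h
    rw [← sub_eq_zero.1 h] at hx
    simp at hx
  have : lam + (1 - x) ≠ 0 := by rwa [← add_sub_assoc]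
  simp only [Pi.add_apply, Pi.smul_apply, smul_eq_mul]
  field_simp
  ring

lemma hasDerivAt_moebius_one (hlam : lam ≠ 0) :
    HasDerivAt (fun x : ℝ => -(c * (1 - x) / (lam + (1 - x)))) (c / lam) 1 := by
  have hone : HasDerivAt (fun x : ℝ => 1 - x) (-1) 1 := (hasDerivAt_id 1).const_sub 1
  refine ((hone.const_mul c).div (hone.const_add lam) (by simpa using hlam)).neg.congr_deriv ?_
  rw [sub_self, add_zero]
  field_simp
  ring

lemma deriv_mittagLefflerOne_comp_moebius_one (hβ : 0 < β) (hlam : lam ≠ 0) :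
    deriv (fun x : ℝ => mittagLefflerOne β (-(c * (1 - x) / (lam + (1 - x))))) 1 =
      c / (lam * Real.Gamma (1 + β)) := by
  have h := HasDerivAt.comp_of_eq (1 : ℝ) (hasDerivAt_mittagLefflerOne_zero hβ)
    (hasDerivAt_moebius_one c hlam) (by simp)
  rw [div_mul_eq_div_div, div_eq_inv_mul _ (Real.Gamma _)]
  exact h.deriv

end MittagLeffler

theorem space_time_mittagLeffler_tail_asymptotics_general {α β lam : ℝ} (c : ℝ)
    (hα : α ∈ Set.Ioo (0 : ℝ) 1) (hβ : 0 < β) (hlam : 1 < |lam + 1|) :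
    Tendsto (fun n : ℕ => (n : ℝ) ^ (α + 1) *
        (1 / (n.factorial : ℝ) * iteratedDeriv n
          (fun u : ℝ => mittagLefflerOne β (-(c * (1 - u) ^ α / (lam + (1 - u) ^ α)))) 0))
      atTop (𝓝 (α * c / (lam * Real.Gamma (1 - α) * Real.Gamma (1 + β)))) := by
  have hlam₀ : lam ≠ 0 := by rintro rfl; simp at hlam
  have hlam₁ : lam + 1 ≠ 0 := abs_pos.1 (one_pos.trans hlam)
  have hR : 1 < ‖lam + 1‖ₑ := by
    simpa [← ofReal_norm] using hlam
  obtain ⟨q, hq⟩ := exists_hasFPowerSeriesOnBall_moebius c hlam₁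
  have hF := hasFPowerSeriesOnBall_comp_of_entire (hasFPowerSeriesOnBall_mittagLefflerOne hβ) hq
  have h := tendsto_rpow_mul_taylorCoeff_comp_one_sub_rpow hα hF hR
  simp only [Function.comp_def, deriv_mittagLefflerOne_comp_moebius_one c hβ hlam₀,
    sub_sub_cancel] at h
  convert h using 2
  ring

/-- For `α ∈ (0,1)`, `β ∈ (0,1]`, `λ > 0`, `ξ > 0`, `t > 0`: the state probabilities
`p_n(t)` of the space-time Mittag-Leffler process — given by the `n`-th Taylor
coefficient at `u = 0` of `u ↦ E_β(−ξt^β(λ+1)(1−u)^α/(λ+(1−u)^α))` — have the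
fat-tailed asymptotics `lim_{n→∞} n^{α+1} p_n(t) = α(λ+1)ξt^β/(λΓ(1−α)Γ(1+β))`. -/
theorem space_time_mittagLeffler_tail_asymptotics (α β lam ξ t : ℝ)
    (hα : α ∈ Set.Ioo (0 : ℝ) 1) (hβ : β ∈ Set.Ioc (0 : ℝ) 1)
    (hlam : 0 < lam) (hξ : 0 < ξ) (ht : 0 < t) :
    Filter.Tendsto (fun n : ℕ => (n : ℝ) ^ (α + 1) *
        ((1 / (n.factorial : ℝ)) * iteratedDeriv n
          (fun u : ℝ => mittagLefflerOne β
            (-(ξ * t ^ β * (lam + 1) * (1 - u) ^ α / (lam + (1 - u) ^ α)))) 0))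
      Filter.atTop
      (nhds (α * (lam + 1) * ξ * t ^ β / (lam * Real.Gamma (1 - α) * Real.Gamma (1 + β)))) := by
  convert space_time_mittagLeffler_tail_asymptotics_general (ξ * t ^ β * (lam + 1)) hα hβ.1
    (lt_abs.2 (.inl (lt_add_of_pos_left 1 hlam))) using 2
  ring
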